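/- Let f be a cellular automaton on A^ℤ. If the restriction of f to ω̃(f) equals the restriction of a shift map σ^n with n ∈ ℤ, n ≠ 0, then ω̃(f) is a chain transitive subshift. -/

import Mathlib

open Filter Set Function

namespace Gls

variable {A : Type*}

/-- The left shift map on `A^ℤ`. -/
def shift (x : ℤ → A) : ℤ → A := fun i => x (i + 1)

/-- A cellular automaton: a continuous shift-commuting self-map of the full shift. -/
def IsCA [TopologicalSpace A] (f : (ℤ → A) → (ℤ → A)) : Prop :=
  Continuous f ∧ f ∘ shift = shift ∘ f

/-- The set of limit points of the forward orbit of `x` under `f`. -/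
def omegaSet [TopologicalSpace A] (f : (ℤ → A) → (ℤ → A)) (x : ℤ → A) : Set (ℤ → A) :=
  {y | MapClusterPt y atTop fun t => f^[t] x}

/-- The realm of attraction of `Y`. -/
def realm [TopologicalSpace A] (f : (ℤ → A) → (ℤ → A)) (Y : Set (ℤ → A)) : Set (ℤ → A) :=
  {x | omegaSet f x ⊆ Y}

/-- The generic limit set: the intersection of all closed sets whose realm is comeager. -/
def genLimitSet [TopologicalSpace A] (f : (ℤ → A) → (ℤ → A)) : Set (ℤ → A) :=
  ⋂₀ {C | IsClosed C ∧ realm f C ∈ residual (ℤ → A)}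

/-- The word `x_{[i, i+n)}` of length `n` read in the configuration `x` from position `i`. -/
def word (x : ℤ → A) (i : ℤ) (n : ℕ) : List A :=
  (List.range n).map fun k => x (i + k)

/-- The cylinder set `[w]_i`. -/
def cylinder (w : List A) (i : ℤ) : Set (ℤ → A) := {x | word x i w.length = w}

/-- The language of `X`: all finite words occurring in points of `X`. -/
def lang (X : Set (ℤ → A)) : Set (List A) :=
  {w | ∃ x ∈ X, ∃ i : ℤ, word x i w.length = w}


/-- A subshift `Y` is transitive if any two words of its language can be joined. -/
def IsTransitiveSubshift {A : Type*} (Y : Set (ℤ → A)) : Prop :=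
  ∀ u ∈ lang Y, ∀ v ∈ lang Y, ∃ w : List A, u ++ w ++ v ∈ lang Y

/-- The order-`n` SFT approximation of `X`: forbid all words of length `n` not in `L_n(X)`. -/
def sftApprox {A : Type*} (X : Set (ℤ → A)) (n : ℕ) : Set (ℤ → A) :=
  {x | ∀ i : ℤ, word x i n ∈ lang X}

/-- `X` is chain transitive if every SFT approximation of `X` is transitive. -/
def ChainTransitive {A : Type*} (X : Set (ℤ → A)) : Prop :=
  ∀ n : ℕ, IsTransitiveSubshift (sftApprox X n)

/-- The (two-sided) shift by `n ∈ ℤ`: `σ^n(x)_i = x_{i+n}`. -/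
def shiftZ {A : Type*} (n : ℤ) (x : ℤ → A) : ℤ → A := fun i => x (i + n)

/-- the window `g[i,i+m)` occurs in `X` -/
def Good (X : Set (ℤ → A)) (m : ℕ) (g : ℤ → A) (i : ℤ) : Prop :=
  ∃ x ∈ X, ∃ i' : ℤ, ∀ k : ℤ, 0 ≤ k → k < m → x (i' + k) = g (i + k)

theorem word_length (x : ℤ → A) (i : ℤ) (m : ℕ) : (word x i m).length = m := by
  simp [word]

theorem word_def' (x : ℤ → A) (i : ℤ) (m : ℕ) :
    word x i m = (List.range m).map fun k : ℕ => x (i + (k : ℤ)) := by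
  have e : ∀ l : List ℕ, List.flatMap (fun a : ℕ => [(a : ℤ)]) l = l.map fun a : ℕ => (a : ℤ) := by
    intro l
    induction l with
    | nil => rfl
    | cons a l ih => rw [List.flatMap_cons, ih]; rfl
  unfold word
  simp [e]

theorem word_eq_iff (x y : ℤ → A) (i j : ℤ) (m : ℕ) :
    word x i m = word y j m ↔ ∀ k : ℤ, 0 ≤ k → k < m → x (i + k) = y (j + k) := by
  simp only [word_def', List.map_inj_left, List.mem_range]
  constructor
  · intro h k h0 hk
    lift k to ℕ using h0
    exact h k (by exact_mod_cast hk)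
  · intro h k hk
    exact h k (by positivity) (by exact_mod_cast hk)

theorem good_iff (X : Set (ℤ → A)) (m : ℕ) (g : ℤ → A) (i : ℤ) :
    word g i m ∈ lang X ↔ Good X m g i := by
  simp only [lang, Good, mem_ofPred_eq, word_length, word_eq_iff]

theorem good_congr {X : Set (ℤ → A)} {m : ℕ} {g h : ℤ → A} {i j : ℤ} (hg : Good X m g i)
    (e : ∀ k : ℤ, 0 ≤ k → k < m → g (i + k) = h (j + k)) : Good X m h j := by
  obtain ⟨x, hx, i', H⟩ := hg
  exact ⟨x, hx, i', fun k h0 h1 => (H k h0 h1).trans (e k h0 h1)⟩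

/-- the window `g[i,i+m)` reaches the window `h[j,j+m)`. -/
def Reach (X : Set (ℤ → A)) (m : ℕ) (g : ℤ → A) (i : ℤ) (h : ℤ → A) (j : ℤ) : Prop :=
  ∃ (p : ℤ → A) (d : ℤ), 0 ≤ d ∧ (∀ k : ℤ, 0 ≤ k → k < m → p k = g (i + k)) ∧
    (∀ k : ℤ, 0 ≤ k → k < m → p (d + k) = h (j + k)) ∧
    ∀ c : ℤ, 0 ≤ c → c ≤ d → Good X m p c

theorem Reach.trans {X : Set (ℤ → A)} {m : ℕ} {g h l : ℤ → A} {i j k : ℤ}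
    (H1 : Reach X m g i h j) (H2 : Reach X m h j l k) : Reach X m g i l k := by
  obtain ⟨p, d, hd, a1, a2, a3⟩ := H1
  obtain ⟨q, e, he, b1, b2, b3⟩ := H2
  have key : ∀ c : ℤ, 0 ≤ c → (if d + c < d + m then p (d + c) else q c) = q c := by
    intro c hc
    split_ifs with hlt
    · rw [a2 c hc (by omega), b1 c hc (by omega)]
    · rfl
  have key' : ∀ c : ℤ, d ≤ c → (if c < d + m then p c else q (c - d)) = q (c - d) := by
    intro c hc
    have := key (c - d) (by omega)
    simpa using this
  refine ⟨fun c => if c < d + m then p c else q (c - d), d + e, by omega, ?_, ?_, ?_⟩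
  · intro c h0 h1
    simp only
    rw [if_pos (by omega), a1 c h0 h1]
  · intro c h0 h1
    simp only
    rw [key' _ (by omega), ← b2 c h0 h1]
    congr 1; omega
  · intro c h0 h1
    by_cases hc : c ≤ d
    · refine good_congr (a3 c h0 hc) fun t t0 t1 => ?_
      rw [if_pos (by omega)]
    · refine good_congr (b3 (c - d) (by omega) (by omega)) fun t t0 t1 => ?_
      rw [key' _ (by omega)]
      congr 1; omega

theorem Reach.row {X : Set (ℤ → A)} {m : ℕ} {g : ℤ → A} {i j : ℤ} (hij : i ≤ j)
    (H : ∀ c, i ≤ c → c ≤ j → Good X m g c) : Reach X m g i g j := by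
  refine ⟨fun c => g (i + c), j - i, by omega, fun k _ _ => rfl, fun k _ _ => ?_, fun c c0 c1 => ?_⟩
  · simp only
    congr 1; omega
  · refine good_congr (H (i + c) (by omega) (by omega)) fun k _ _ => ?_
    congr 1; omega

theorem Reach.congr {X : Set (ℤ → A)} {m : ℕ} {g h g' h' : ℤ → A} {i j i' j' : ℤ}
    (H : Reach X m g i h j) (e1 : ∀ k : ℤ, 0 ≤ k → k < m → g (i + k) = g' (i' + k))
    (e2 : ∀ k : ℤ, 0 ≤ k → k < m → h (j + k) = h' (j' + k)) : Reach X m g' i' h' j' := by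
  obtain ⟨p, d, hd, a1, a2, a3⟩ := H
  exact ⟨p, d, hd, fun k h0 h1 => (a1 k h0 h1).trans (e1 k h0 h1),
    fun k h0 h1 => (a2 k h0 h1).trans (e2 k h0 h1), a3⟩

theorem transitive_of_reach {X : Set (ℤ → A)} {m : ℕ}
    (H : ∀ x ∈ X, ∀ y ∈ X, ∀ i j : ℤ, Reach X m x i y j) :
    IsTransitiveSubshift (sftApprox X m) := by
  rintro u ⟨z1, hz1, i, hu⟩ v ⟨z2, hz2, j, hv⟩
  have hz1' : ∀ c, Good X m z1 c := fun c => (good_iff _ _ _ _).1 (hz1 c)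
  have hz2' : ∀ c, Good X m z2 c := fun c => (good_iff _ _ _ _).1 (hz2 c)
  obtain ⟨x, hx, i', hxi⟩ := hz1' (i + u.length)
  obtain ⟨y, hy, j', hyj⟩ := hz2' (j - m)
  obtain ⟨p, d, hd, a1, a2, a3⟩ :=
    (H x hx y hy i' j').congr hxi hyj
  let P : ℤ → A := fun c => if c < 0 then z1 (i + u.length + c) else
    if c < d + m then p c else z2 (j - m + (c - d))
  have P1 : ∀ c : ℤ, c < m → P c = z1 (i + u.length + c) := by
    intro c hc
    by_cases h0 : c < 0
    · simp only [P, if_pos h0]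
    · simp only [P, if_neg h0]
      rw [if_pos (by omega), a1 c (by omega) hc]
  have P2 : ∀ c : ℤ, 0 ≤ c → c < d + m → P c = p c := by
    intro c h0 hc
    simp only [P]
    rw [if_neg (by omega), if_pos hc]
  have P3 : ∀ c : ℤ, d ≤ c → P c = z2 (j - m + (c - d)) := by
    intro c hc
    by_cases h0 : c < d + m
    · rw [P2 c (by omega) h0, ← a2 (c - d) (by omega) (by omega)]
      congr 1; omega
    · simp only [P]
      rw [if_neg (by omega), if_neg h0]
  have hP : P ∈ sftApprox X m := by
    intro c
    rw [good_iff]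
    by_cases h0 : c ≤ 0
    · refine good_congr (hz1' (i + u.length + c)) fun k k0 k1 => ?_
      rw [P1 _ (by omega)]
      congr 1; omega
    by_cases h1 : c ≤ d
    · refine good_congr (a3 c (by omega) h1) fun k k0 k1 => ?_
      rw [P2 _ (by omega) (by omega)]
    · refine good_congr (hz2' (j - m + (c - d))) fun k k0 k1 => ?_
      rw [P3 _ (by omega)]
      congr 1; omega
  have wadd : ∀ (a : ℤ) (s t : ℕ), word P a (s + t) = word P a s ++ word P (a + s) t := by
    intro a s t
    simp only [word_def', List.range_add, List.map_append, List.map_map]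
    congr 1
    apply List.map_congr_left
    intro k _
    simp [add_assoc]
  have hu' : word P (-u.length) u.length = u := by
    conv_rhs => rw [← hu]
    rw [word_eq_iff]
    intro k k0 k1
    rw [P1 _ (by omega)]
    congr 1; omega
  have hv' : word P (d + m) v.length = v := by
    conv_rhs => rw [← hv]
    rw [word_eq_iff]
    intro k k0 k1
    rw [P3 _ (by omega)]
    congr 1; omega
  refine ⟨word P 0 (d.toNat + m), P, hP, -u.length, ?_⟩
  rw [List.length_append, List.length_append, word_length, wadd, wadd, hu']
  have e1 : (-(u.length : ℤ) + u.length) = 0 := by omega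
  have e2 : (-(u.length : ℤ) + ((u.length + (d.toNat + m) : ℕ) : ℤ)) = d + m := by
    push_cast; omega
  rw [e1, e2, hv']

section top
variable [TopologicalSpace A]

theorem isClosed_gen (f : (ℤ → A) → (ℤ → A)) : IsClosed (genLimitSet f) :=
  isClosed_sInter fun _ h => h.1

theorem realm_gen [SecondCountableTopology A] (f : (ℤ → A) → (ℤ → A)) :
    realm f (genLimitSet f) ∈ residual (ℤ → A) := by
  set S := {C | IsClosed C ∧ realm f C ∈ residual (ℤ → A)} with hS
  obtain ⟨T, hTc, hTS, hTU⟩ := TopologicalSpace.isOpen_sUnion_countable (compl '' S)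
    (by rintro _ ⟨C, hC, rfl⟩; exact hC.1.isOpen_compl)
  have hmem : (⋂ s ∈ T, realm f sᶜ) ∈ residual (ℤ → A) := by
    rw [countable_bInter_mem hTc]
    intro s hs
    obtain ⟨C, hC, rfl⟩ := hTS hs
    rw [compl_compl]; exact hC.2
  refine mem_of_superset hmem ?_
  intro x hx y hy
  by_contra hcon
  have : y ∈ ⋃₀ (compl '' S) := by
    simp only [genLimitSet, mem_sInter, not_forall] at hcon
    obtain ⟨C, hC, hyC⟩ := hcon
    exact ⟨Cᶜ, ⟨C, hC, rfl⟩, hyC⟩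
  rw [← hTU] at this
  obtain ⟨s, hs, hys⟩ := this
  have := mem_iInter₂.1 hx s hs
  exact this hy hys

theorem eventually_mem [CompactSpace A] {f : (ℤ → A) → (ℤ → A)} {X U : Set (ℤ → A)}
    {x : ℤ → A} (hx : x ∈ realm f X) (hU : IsOpen U) (hXU : X ⊆ U) :
    ∀ᶠ t in atTop, f^[t] x ∈ U := by
  by_contra hcon
  have hfr : ∃ᶠ t in atTop, f^[t] x ∈ Uᶜ := not_eventually.1 hcon
  obtain ⟨y, hy, hc⟩ := hU.isClosed_compl.isCompact.exists_mapClusterPt_of_frequently hfr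
  exact hy (hXU (hx hc))

theorem not_meagre [SecondCountableTopology A] {f : (ℤ → A) → (ℤ → A)} {x₀ : ℤ → A}
    (h0 : x₀ ∈ genLimitSet f) {U : Set (ℤ → A)} (hU : IsOpen U) (hxU : x₀ ∈ U) :
    ¬ IsMeagre {x | ∃ᶠ t in atTop, f^[t] x ∈ U} := by
  intro hm
  have h1 : realm f (genLimitSet f ∩ Uᶜ) ∈ residual (ℤ → A) := by
    filter_upwards [realm_gen f, hm] with x hx hx' y hy
    refine ⟨hx hy, fun hyU => hx' ?_⟩
    exact hy.frequently (hU.mem_nhds hyU)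
  have := h0 (genLimitSet f ∩ Uᶜ) ⟨(isClosed_gen f).inter hU.isClosed_compl, h1⟩
  exact this.2 hxU

theorem enabling [SecondCountableTopology A] {f : (ℤ → A) → (ℤ → A)} (hf : Continuous f)
    {x₀ : ℤ → A} (h0 : x₀ ∈ genLimitSet f) {U : Set (ℤ → A)} (hU : IsOpen U) (hxU : x₀ ∈ U) :
    ∃ O : Set (ℤ → A), IsOpen O ∧ O.Nonempty ∧
      {x | x ∈ O → ∃ᶠ t in atTop, f^[t] x ∈ U} ∈ residual (ℤ → A) := by
  set G := {x | ∃ᶠ t in atTop, f^[t] x ∈ U} with hG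
  have hne : (interior (closure G)).Nonempty := by
    rw [nonempty_iff_ne_empty]
    intro he
    exact not_meagre h0 hU hxU (IsNowhereDense.isMeagre he)
  refine ⟨interior (closure G), isOpen_interior, hne, ?_⟩
  set O := interior (closure G)
  let W : ℕ → Set (ℤ → A) := fun N => ⋃ t ≥ N, (f^[t]) ⁻¹' U
  have hWo : ∀ N, IsOpen (W N) := fun N =>
    isOpen_biUnion fun t _ => hU.preimage (hf.iterate t)
  have hGW : ∀ N, G ⊆ W N := by
    intro N x hx
    obtain ⟨t, ht, h⟩ := frequently_atTop.1 hx N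
    exact mem_iUnion₂.2 ⟨t, ht, h⟩
  have hres : ∀ N, W N ∪ (closure O)ᶜ ∈ residual (ℤ → A) := by
    intro N
    refine residual_of_dense_open ((hWo N).union isClosed_closure.isOpen_compl) ?_
    intro x
    by_cases hx : x ∈ closure O
    · have : closure O ⊆ closure G :=
        closure_minimal interior_subset isClosed_closure
      exact closure_mono ((hGW N).trans subset_union_left) (this hx)
    · exact subset_closure (Or.inr hx)
  filter_upwards [countable_iInter_mem.2 hres] with x hx hxO
  rw [frequently_atTop]
  intro N
  rcases mem_iInter.1 hx N with h | h
  · obtain ⟨t, ht, h⟩ := mem_iUnion₂.1 h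
    exact ⟨t, ht, h⟩
  · exact absurd (subset_closure hxO) h

theorem commZ {f : (ℤ → A) → (ℤ → A)} (hf : IsCA f) (j : ℕ) (x : ℤ → A) :
    f (shiftZ j x) = shiftZ j (f x) := by
  induction j with
  | zero =>
    have e : ∀ y : ℤ → A, shiftZ ((0 : ℕ) : ℤ) y = y := by
      intro y
      funext i
      simp [shiftZ]
    rw [e, e]
  | succ k ih =>
    have e : ∀ y : ℤ → A, shiftZ ((k + 1 : ℕ) : ℤ) y = shift (shiftZ k y) := by
      intro y
      funext i
      simp only [shiftZ, shift]
      congr 1; push_cast; omega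
    rw [e, e, ← ih]
    exact congrFun hf.2 _

theorem commZ_iter {f : (ℤ → A) → (ℤ → A)} (hf : IsCA f) (j : ℕ) (t : ℕ) (x : ℤ → A) :
    f^[t] (shiftZ j x) = shiftZ j (f^[t] x) := by
  induction t with
  | zero => rfl
  | succ t ih => rw [iterate_succ_apply', iterate_succ_apply', ih, commZ hf]

/-- the shift as a homeomorphism -/
def shiftHomeo (j : ℤ) : (ℤ → A) ≃ₜ (ℤ → A) where
  toFun := shiftZ j
  invFun := shiftZ (-j)
  left_inv x := by funext i; simp [shiftZ]
  right_inv x := by funext i; simp [shiftZ]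
  continuous_toFun := continuous_pi fun i => continuous_apply _
  continuous_invFun := continuous_pi fun i => continuous_apply _

theorem cyl_sub {O : Set (ℤ → A)} (hO : IsOpen O) {p : ℤ → A} (hp : p ∈ O) :
    ∃ N : ℕ, ∀ q : ℤ → A, (∀ i : ℤ, |i| ≤ N → q i = p i) → q ∈ O := by
  obtain ⟨I, u, hu, hsub⟩ := isOpen_pi_iff.1 hO p hp
  refine ⟨∑ i ∈ I, i.natAbs, fun q hq => hsub ?_⟩
  intro i hi
  have : i.natAbs ≤ ∑ i ∈ I, i.natAbs :=
    Finset.single_le_sum (f := fun i : ℤ => i.natAbs) (fun _ _ => Nat.zero_le _) hi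
  rw [hq i (by rw [Int.abs_eq_natAbs]; exact_mod_cast this)]
  exact (hu i hi).2

theorem mixing {O O' : Set (ℤ → A)} (hO : IsOpen O) (hO' : IsOpen O') (h : O.Nonempty)
    (h' : O'.Nonempty) (L : ℕ) : ∃ j : ℕ, L ≤ j ∧ (O ∩ shiftZ j ⁻¹' O').Nonempty := by
  obtain ⟨p, hp⟩ := h
  obtain ⟨q, hq⟩ := h'
  obtain ⟨N, hN⟩ := cyl_sub hO hp
  obtain ⟨M, hM⟩ := cyl_sub hO' hq
  refine ⟨L + N + M + 1, by omega,
    fun i => if i ≤ N then p i else q (i - (L + N + M + 1 : ℕ)), hN _ ?_, hM _ ?_⟩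
  · intro i hi
    rw [abs_le] at hi
    exact if_pos hi.2
  · intro i hi
    rw [abs_le] at hi
    simp only [shiftZ]
    rw [if_neg (by push_cast; omega)]
    congr 1; omega

theorem isOpen_window [DiscreteTopology A] (m : ℕ) (i : ℤ) (P : (Fin m → A) → Prop) :
    IsOpen {y : ℤ → A | P fun k => y (i + (k : ℕ))} := by
  have hc : Continuous fun (y : ℤ → A) (k : Fin m) => y (i + (k : ℕ)) :=
    continuous_pi fun k => continuous_apply _
  exact (isOpen_discrete {w | P w}).preimage hc

theorem isOpen_agree [DiscreteTopology A] (m : ℕ) (i : ℤ) (x : ℤ → A) (i' : ℤ) :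
    IsOpen {y : ℤ → A | ∀ k : ℤ, 0 ≤ k → k < m → x (i' + k) = y (i + k)} := by
  convert isOpen_window m i (fun w => ∀ k : Fin m, x (i' + (k : ℕ)) = w k) using 3 with y
  constructor
  · intro h k
    exact h (k : ℕ) (by positivity) (by exact_mod_cast k.2)
  · intro h k h0 h1
    lift k to ℕ using h0
    exact h ⟨k, by exact_mod_cast h1⟩

theorem isOpen_good [DiscreteTopology A] (X : Set (ℤ → A)) (m : ℕ) (i : ℤ) :
    IsOpen {y : ℤ → A | Good X m y i} := by
  have : {y : ℤ → A | Good X m y i} = ⋃ x ∈ X, ⋃ i' : ℤ,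
      {y : ℤ → A | ∀ k : ℤ, 0 ≤ k → k < m → x (i' + k) = y (i + k)} := by
    ext y; simp [Good]
  rw [this]
  exact isOpen_biUnion fun x _ => isOpen_iUnion fun i' => isOpen_agree m i x i'

end top

/-- if the restriction of `f` to `ω̃(f)` equals the restriction of a shift
map `σ^n` with `n ≠ 0`, then `ω̃(f)` is chain transitive. -/
theorem stmt12 [Fintype A] [Nonempty A] [TopologicalSpace A] [DiscreteTopology A]
    (f : (ℤ → A) → (ℤ → A)) (hf : IsCA f) (n : ℤ) (hn : n ≠ 0)
    (hres : ∀ x ∈ genLimitSet f, f x = shiftZ n x) :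
    ChainTransitive (genLimitSet f) := by
  intro m
  apply transitive_of_reach
  intro x₀ hx₀ x₁ hx₁ i₀ i₁
  set X := genLimitSet f with hX
  obtain ⟨O, hO, hOn, hOr⟩ := enabling hf.1 hx₀ (isOpen_agree m i₀ x₀ i₀) (fun _ _ _ => rfl)
  obtain ⟨O', hO', hOn', hOr'⟩ := enabling hf.1 hx₁ (isOpen_agree m i₁ x₁ i₁) (fun _ _ _ => rfl)
  obtain ⟨j, hj, hne⟩ := mixing hO hO' hOn hOn' (i₀ - i₁).toNat
  have hcont : Continuous (shiftZ (j : ℤ) : (ℤ → A) → (ℤ → A)) := (shiftHomeo (j : ℤ)).continuous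
  have hopen : IsOpenMap (shiftZ (j : ℤ) : (ℤ → A) → (ℤ → A)) := (shiftHomeo (j : ℤ)).isOpenMap
  have hOr'' := tendsto_residual_of_isOpenMap hcont hopen hOr'
  have hall := inter_mem (inter_mem hOr hOr'') (realm_gen f)
  obtain ⟨x, hxO, ⟨⟨hx1, hx2⟩, hx3⟩⟩ :=
    (dense_of_mem_residual hall).inter_open_nonempty _ (hO.inter (hO'.preimage hcont)) hne
  replace hx1 := hx1 hxO.1
  replace hx2 : ∃ᶠ t in atTop, f^[t] (shiftZ j x) ∈ _ := hx2 hxO.2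
  have hgood : ∀ c, ∀ᶠ t in atTop, Good X m (f^[t] x) c := fun c =>
    eventually_mem hx3 (isOpen_good X m c) (fun y hy => ⟨y, hy, c, fun _ _ _ => rfl⟩)
  have hshift : ∀ c, ∀ᶠ t in atTop, f^[t + 1] x c = f^[t] x (c + n) := by
    intro c
    have ho : IsOpen {y : ℤ → A | f y c = y (c + n)} :=
      (isOpen_discrete {p : A × A | p.1 = p.2}).preimage
        (((continuous_apply c).comp hf.1).prodMk (continuous_apply (c + n)))
    filter_upwards [eventually_mem hx3 ho (fun y hy => by
      simp only [mem_ofPred_eq]; rw [hres y hy]; rfl)] with t ht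
    rw [iterate_succ_apply']
    exact ht
  obtain ⟨B, hB⟩ : ∃ B : ℤ, B = |i₀| + |i₁| + j + |n| + m := ⟨_, rfl⟩
  have hev : ∀ᶠ t in atTop, ∀ c ∈ Finset.Icc (-B) B,
      Good X m (f^[t] x) c ∧ f^[t + 1] x c = f^[t] x (c + n) := by
    rw [Filter.eventually_all_finset]
    intro c _
    exact (hgood c).and (hshift c)
  obtain ⟨T, hT⟩ := eventually_atTop.1 hev
  have hG : ∀ t ≥ T, ∀ c, -B ≤ c → c ≤ B → Good X m (f^[t] x) c := fun t ht c h1 h2 =>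
    (hT t ht c (Finset.mem_Icc.2 ⟨h1, h2⟩)).1
  have hS : ∀ t ≥ T, ∀ c, -B ≤ c → c ≤ B → f^[t + 1] x c = f^[t] x (c + n) :=
    fun t ht c h1 h2 => (hT t ht c (Finset.mem_Icc.2 ⟨h1, h2⟩)).2
  have b0 := neg_abs_le i₀
  have b0' := le_abs_self i₀
  have b1 := neg_abs_le i₁
  have b1' := le_abs_self i₁
  have b2 := neg_abs_le n
  have b2' := le_abs_self n
  have p0 := abs_nonneg i₀
  have p1 := abs_nonneg i₁
  have p2 := abs_nonneg n
  -- reaching from left to right in a row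
  have hrow : ∀ t ≥ T, Reach X m (f^[t] x) i₀ (f^[t] x) (i₁ + j) := fun t ht =>
    Reach.row (by omega) fun c c0 c1 => hG t ht c (by omega) (by omega)
  -- it suffices to connect some occurrences
  suffices hh : ∃ t1 ≥ T, ∃ t2 ≥ T, f^[t1] x ∈ {y : ℤ → A | ∀ k : ℤ, 0 ≤ k → k < m →
      x₀ (i₀ + k) = y (i₀ + k)} ∧ f^[t2] (shiftZ j x) ∈ {y : ℤ → A | ∀ k : ℤ, 0 ≤ k → k < m →
      x₁ (i₁ + k) = y (i₁ + k)} ∧ Reach X m (f^[t1] x) i₀ (f^[t2] x) i₀ by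
    obtain ⟨t1, _, t2, h2, hu, hv, hr⟩ := hh
    refine (hr.trans (hrow t2 h2)).congr (fun k k0 k1 => (hu k k0 k1).symm) fun k k0 k1 => ?_
    rw [hv k k0 k1, commZ_iter hf]
    exact congrArg (f^[t2] x) (by omega)
  rcases lt_or_gt_of_ne hn with hneg | hpos
  · have hiter : ∀ t ≥ T, ∀ s : ℕ, Reach X m (f^[t + s] x) i₀ (f^[t] x) i₀ := by
      intro t ht s
      induction s with
      | zero => exact Reach.row le_rfl fun c c0 c1 => hG t ht c (by omega) (by omega)
      | succ s ih =>
        refine Reach.trans ?_ ih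
        have : Reach X m (f^[t + s] x) (i₀ + n) (f^[t + s] x) i₀ :=
          Reach.row (by omega) fun c c0 c1 => hG _ (by omega) c (by omega) (by omega)
        refine this.congr (fun k k0 k1 => ?_) (fun _ _ _ => rfl)
        rw [← add_assoc, hS (t + s) (by omega) _ (by omega) (by omega)]
        exact congrArg (f^[t + s] x) (by omega)
    obtain ⟨t2, ht2, hv⟩ := frequently_atTop.1 hx2 T
    obtain ⟨t1, ht1, hu⟩ := frequently_atTop.1 hx1 t2
    obtain ⟨s, rfl⟩ := Nat.exists_eq_add_of_le ht1
    exact ⟨_, by omega, t2, ht2, hu, hv, hiter t2 ht2 s⟩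
  · have hiter : ∀ t ≥ T, ∀ s : ℕ, Reach X m (f^[t] x) i₀ (f^[t + s] x) i₀ := by
      intro t ht s
      induction s with
      | zero => exact Reach.row le_rfl fun c c0 c1 => hG t ht c (by omega) (by omega)
      | succ s ih =>
        refine Reach.trans ih ?_
        have : Reach X m (f^[t + s] x) i₀ (f^[t + s] x) (i₀ + n) :=
          Reach.row (by omega) fun c c0 c1 => hG _ (by omega) c (by omega) (by omega)
        refine this.congr (fun _ _ _ => rfl) (fun k k0 k1 => ?_)
        rw [← add_assoc, hS (t + s) (by omega) _ (by omega) (by omega)]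
        exact congrArg (f^[t + s] x) (by omega)
    obtain ⟨t1, ht1, hu⟩ := frequently_atTop.1 hx1 T
    obtain ⟨t2, ht2, hv⟩ := frequently_atTop.1 hx2 t1
    obtain ⟨s, rfl⟩ := Nat.exists_eq_add_of_le ht2
    exact ⟨t1, ht1, _, by omega, hu, hv, hiter t1 ht1 s⟩

end Gls
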